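/- A free product of commutative transitive groups is commutative transitive. -/

import Mathlib

/-!
Elements of a free product have unique reduced words. Two nontrivial elements commuting with a
nontrivial `b` commute with each other, by induction on the length of the reduced word of `b`
(`FreeProd.commute_of_commute`). If the first and last letters of `b` lie in the same factor,
conjugating by the first letter shortens the word, unless `b` itself lies in a factor. Two cases
remain.

* If `b ≠ 1` lies in a factor, then so does its centralizer (`FreeProd.exists_of_eq_of_commute`),
  and commutative transitivity of that factor applies.
* If `b` is cyclically reduced of length at least two and `a` commutes with `b`, then for large `K`
  the products of `a * b ^ K` with `b` on either side are reduced without any cancellation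
  (`FreeProd.exists_wd_append_comm`), so the *words* of `a * b ^ K` and `b` commute in the free
  monoid on the letters. In a free monoid two words commuting with the same nonempty word `b`
  commute, because their two products are prefixes of equal length of a power of `b`
  (`FreeProd.list_append_comm`).
-/

/-- A group is commutative transitive if commuting is transitive on nontrivial
elements. -/
def CommutativeTransitive (G : Type*) [Group G] : Prop :=
  ∀ a b c : G, a ≠ 1 → b ≠ 1 → c ≠ 1 → Commute a b → Commute b c → Commute a c

universe u v

namespace FreeProd

open Monoid

/-! ### Commuting words in a free monoid -/

/-- The centralizer of a nonempty word in a free monoid is commutative. -/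
theorem list_append_comm {α : Type*} {b x y : List α} (hb : b ≠ [])
    (hx : x ++ b = b ++ x) (hy : y ++ b = b ++ y) : x ++ y = y ++ x := by
  let B : ℕ → List α := fun n => (List.replicate n b).flatten
  have hlen : ∀ n, n ≤ (B n).length := by
    intro n
    have := List.length_pos_iff.mpr hb
    simp only [B, List.length_flatten, List.map_replicate, List.sum_replicate, smul_eq_mul]
    nlinarith
  have hpow : ∀ w : List α, w ++ b = b ++ w → ∀ n, w ++ B n = B n ++ w := by
    intro w hw n
    induction n with
    | zero => simp [B]
    | succ n ih =>
      have hB : B (n + 1) = b ++ B n := by simp [B, List.replicate_succ]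
      rw [hB, ← List.append_assoc, hw, List.append_assoc, ih, List.append_assoc]
  have hprefix : ∀ w : List α, w ++ b = b ++ w → w <+: B w.length := by
    intro w hw
    have h1 : w <+: B w.length ++ w := ⟨B w.length, hpow w hw _⟩
    exact List.prefix_of_prefix_length_le h1 (List.prefix_append _ _) (hlen _)
  have h1 := hprefix (x ++ y) (by rw [List.append_assoc, hy, ← List.append_assoc, hx,
    List.append_assoc])
  have h2 := hprefix (y ++ x) (by rw [List.append_assoc, hx, ← List.append_assoc, hy,
    List.append_assoc])
  have hl : (x ++ y).length = (y ++ x).length := by simp [add_comm]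
  rw [hl] at h1
  exact (List.prefix_of_prefix_length_le h1 h2 hl.le).eq_of_length hl

/-! ### Reduced words -/

variable {ι : Type*} {G : ι → Type*} [∀ i, Group (G i)]

/-- A list of letters is reduced if no letter is `1` and adjacent letters lie in different
factors. -/
def Reduced (l : List (Σ i, G i)) : Prop :=
  (∀ p ∈ l, p.2 ≠ 1) ∧ l.IsChain fun p q => p.1 ≠ q.1

/-- The element of the free product spelled by a list of letters. -/
def eval (l : List (Σ i, G i)) : CoprodI G := (l.map fun p => CoprodI.of p.2).prod

@[simp] theorem eval_nil : eval ([] : List (Σ i, G i)) = 1 := rfl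

@[simp] theorem eval_cons (p : Σ i, G i) (l : List (Σ i, G i)) :
    eval (p :: l) = CoprodI.of p.2 * eval l := by simp [eval]

@[simp] theorem eval_append (l m : List (Σ i, G i)) : eval (l ++ m) = eval l * eval m := by
  simp [eval]

open Classical in
/-- The letters of the reduced word of an element of the free product. -/
noncomputable def wd (x : CoprodI G) : List (Σ i, G i) := (CoprodI.Word.equiv x).toList

theorem wd_reduced (x : CoprodI G) : Reduced (wd x) := by
  classical
  exact ⟨(CoprodI.Word.equiv x).ne_one, (CoprodI.Word.equiv x).chain_ne⟩

@[simp] theorem eval_wd (x : CoprodI G) : eval (wd x) = x := by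
  classical
  exact CoprodI.Word.equiv.symm_apply_apply x

theorem wd_eval {l : List (Σ i, G i)} (h : Reduced l) : wd (eval l) = l := by
  classical
  exact congrArg CoprodI.Word.toList (CoprodI.Word.equiv.apply_symm_apply ⟨l, h.1, h.2⟩)

theorem wd_eq_nil {x : CoprodI G} : wd x = [] ↔ x = 1 := by
  constructor
  · intro h
    rw [← eval_wd x, h, eval_nil]
  · rintro rfl
    exact wd_eval (l := []) ⟨by simp, by simp⟩

theorem reduced_singleton {i : ι} {g : G i} (hg : g ≠ 1) :
    Reduced ([⟨i, g⟩] : List (Σ i, G i)) := ⟨by simpa using hg, by simp⟩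

theorem wd_of {i : ι} {g : G i} (hg : g ≠ 1) : wd (CoprodI.of g) = [⟨i, g⟩] := by
  simpa using wd_eval (reduced_singleton hg)

theorem wd_inv (x : CoprodI G) :
    wd x⁻¹ = ((wd x).map fun p => (⟨p.1, p.2⁻¹⟩ : Σ i, G i)).reverse := by
  obtain ⟨h1, h2⟩ := wd_reduced x
  have hr : Reduced ((wd x).map fun p => (⟨p.1, p.2⁻¹⟩ : Σ i, G i)).reverse := by
    refine ⟨?_, ?_⟩
    · intro p hp
      simp only [List.mem_reverse, List.mem_map] at hp
      obtain ⟨q, hq, rfl⟩ := hp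
      simpa using h1 q hq
    · rw [List.isChain_reverse, List.isChain_map]
      exact h2.imp fun _ _ h => h.symm
  rw [← wd_eval hr]
  congr 1
  conv_lhs => rw [← eval_wd x]
  simp [eval, List.prod_inv_reverse, Function.comp_def]

/-- The reduced words of `x` and `y` can be concatenated without cancelling or merging letters.
For `b ≠ 1`, the condition `Joins b b` says that `b` is cyclically reduced of length at least two. -/
def Joins (x y : CoprodI G) : Prop :=
  ∀ p ∈ (wd x).getLast?, ∀ q ∈ (wd y).head?, p.1 ≠ q.1

theorem Joins.wd_mul {x y : CoprodI G} (h : Joins x y) : wd (x * y) = wd x ++ wd y := by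
  have hr : Reduced (wd x ++ wd y) := by
    refine ⟨?_, List.isChain_append.mpr ⟨(wd_reduced x).2, (wd_reduced y).2, h⟩⟩
    intro p hp
    rcases List.mem_append.mp hp with hp | hp
    · exact (wd_reduced x).1 p hp
    · exact (wd_reduced y).1 p hp
  simpa using wd_eval hr

theorem Joins.inv {x y : CoprodI G} (h : Joins x y) : Joins y⁻¹ x⁻¹ := by
  intro p hp q hq
  simp only [wd_inv, List.getLast?_reverse, List.head?_reverse, List.head?_map,
    List.getLast?_map, Option.mem_def, Option.map_eq_some_iff] at hp hq
  obtain ⟨p', hp', rfl⟩ := hp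
  obtain ⟨q', hq', rfl⟩ := hq
  exact (h q' hq' p' hp').symm

/-! ### Centralizers of cyclically reduced elements -/

/-- Right multiplication by at least one of `b`, `b⁻¹` involves no cancellation: the last letter of
`x` cannot share its factor with both the first and the last letter of `b`. -/
theorem joins_or_joins_inv {b : CoprodI G} (hbb : Joins b b) (x : CoprodI G) :
    Joins x b ∨ Joins x b⁻¹ := by
  by_contra! h
  obtain ⟨h1, h2⟩ := h
  simp only [Joins, not_forall, not_not] at h1 h2
  obtain ⟨p, hp, q, hq, hpq⟩ := h1
  obtain ⟨p', hp', q', hq', hpq'⟩ := h2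
  simp only [wd_inv, List.head?_reverse, List.getLast?_map, Option.mem_def,
    Option.map_eq_some_iff] at hq'
  obtain ⟨r, hr, rfl⟩ := hq'
  obtain rfl : p = p' := Option.mem_unique hp hp'
  exact hbb r hr q hq (hpq'.symm.trans hpq)

theorem Joins.mul_left {x y z : CoprodI G} (hy : y ≠ 1) (hxy : Joins x y) (hyz : Joins y z) :
    Joins (x * y) z := by
  intro p hp
  rw [hxy.wd_mul, List.getLast?_append_of_ne_nil _ (mt wd_eq_nil.mp hy)] at hp
  exact hyz p hp

theorem Joins.mul_pow {x b : CoprodI G} (h : Joins x b) (hb : b ≠ 1) (hbb : Joins b b) (n : ℕ) :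
    Joins (x * b ^ n) b := by
  induction n with
  | zero => simpa using h
  | succ n ih =>
    rw [pow_succ, ← mul_assoc]
    exact ih.mul_left hb hbb

theorem Joins.le_length_mul_pow {x b : CoprodI G} (h : Joins x b) (hb : b ≠ 1) (hbb : Joins b b)
    (n : ℕ) : n ≤ (wd (x * b ^ n)).length := by
  induction n with
  | zero => simp
  | succ n ih =>
    have := List.length_pos_iff.mpr (mt wd_eq_nil.mp hb)
    rw [pow_succ, ← mul_assoc, (h.mul_pow hb hbb n).wd_mul, List.length_append]
    omega

/-- Only finitely many copies of a cyclically reduced `b` are affected by cancellation against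
`x`. -/
theorem exists_joins_mul_pow {b : CoprodI G} (hb : b ≠ 1) (hbb : Joins b b) (x : CoprodI G) :
    ∃ N : ℕ, Joins (x * b ^ N) b := by
  by_contra! h
  -- Otherwise `x = (x * b ^ N) * b⁻¹ ^ N` has no cancellation, so `x` is arbitrarily long.
  let N := (wd x).length + 1
  have h1 := ((joins_or_joins_inv hbb (x * b ^ N)).resolve_left (h N)).le_length_mul_pow
    (inv_ne_one.mpr hb) hbb.inv N
  rw [inv_pow, mul_inv_cancel_right] at h1
  omega

/-- Up to a power of `b`, an element commuting with a cyclically reduced `b` commutes with it already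
at the level of words. -/
theorem exists_wd_append_comm {a b : CoprodI G} (hb : b ≠ 1) (hbb : Joins b b)
    (hab : Commute a b) :
    ∃ K : ℕ, wd (a * b ^ K) ++ wd b = wd b ++ wd (a * b ^ K) := by
  obtain ⟨N, hN⟩ := exists_joins_mul_pow hb hbb a
  obtain ⟨M, hM⟩ := exists_joins_mul_pow (inv_ne_one.mpr hb) hbb.inv a⁻¹
  have h1 : Joins (a * b ^ (N + M)) b := by
    rw [pow_add, ← mul_assoc]
    exact hN.mul_pow hb hbb M
  have h2 : Joins b (a * b ^ (N + M)) := by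
    have := (hM.mul_pow (inv_ne_one.mpr hb) hbb.inv N).inv
    rw [(hab.pow_right (N + M)).eq]
    simpa [pow_add, mul_assoc] using this
  refine ⟨N + M, ?_⟩
  rw [← h1.wd_mul, ← h2.wd_mul, (hab.mul_left (Commute.pow_self b (N + M))).eq]

/-- The centralizer of a cyclically reduced element of length at least two is commutative. -/
theorem commute_of_joins {a b c : CoprodI G} (hb : b ≠ 1) (hbb : Joins b b)
    (hab : Commute a b) (hcb : Commute c b) : Commute a c := by
  obtain ⟨K, hK⟩ := exists_wd_append_comm hb hbb hab
  obtain ⟨L, hL⟩ := exists_wd_append_comm hb hbb hcb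
  have h := congrArg eval (list_append_comm (mt wd_eq_nil.mp hb) hK hL)
  simp only [eval_append, eval_wd] at h
  have h' : Commute (a * b ^ K) (c * b ^ L) := h
  have h1 : Commute a (c * b ^ L) := by
    have := h'.mul_left ((hcb.symm.mul_right (Commute.self_pow b L)).pow_left K).inv_left
    rwa [mul_inv_cancel_right] at this
  have := h1.mul_right (hab.pow_right L).inv_right
  rwa [mul_inv_cancel_right] at this

/-! ### Centralizers of elements of a factor -/

/-- Multiplying on the right by an element of the `i`-th factor does not change the factor of the
first letter of a nontrivial `y` that does not start in the `i`-th factor. -/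
theorem not_head_mul_of {y : CoprodI G} {i : ι} (hy : ∀ p ∈ (wd y).head?, p.1 ≠ i) (g : G i) :
    ∀ p ∈ (wd (y * CoprodI.of g)).head?, y ≠ 1 → p.1 ≠ i := by
  intro p hp hy1
  by_cases hg : g = 1
  · subst hg
    simp only [map_one, mul_one] at hp
    exact hy p hp
  by_cases hj : Joins y (CoprodI.of g)
  · rw [hj.wd_mul, List.head?_append_of_ne_nil _ (mt wd_eq_nil.mp hy1)] at hp
    exact hy p hp
  · simp only [Joins, wd_of hg, not_forall, not_not] at hj
    obtain ⟨q, hq, r, hr, hqr⟩ := hj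
    obtain rfl : ⟨i, g⟩ = r := by simpa using hr
    obtain ⟨j, k⟩ := q
    obtain rfl : j = i := hqr
    obtain ⟨m, hm⟩ := List.getLast?_eq_some_iff.mp hq
    have hred := wd_reduced y
    -- As `y` does not start in the factor of its last letter, a letter precedes the last one.
    have hm0 : m ≠ [] := by
      rintro rfl
      exact hy ⟨j, k⟩ (by simp [hm]) rfl
    have hyg : y * CoprodI.of g = eval m * CoprodI.of (k * g) := by
      conv_lhs => rw [← eval_wd y, hm]
      simp [mul_assoc]
    rw [hm] at hred
    have hmred : Reduced m :=
      ⟨fun p hp => hred.1 p (by simp [hp]), (List.isChain_append.mp hred.2).1⟩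
    have hhead : ∀ p ∈ m.head?, p.1 ≠ j := by
      intro p hp
      refine hy p ?_
      rwa [hm, List.head?_append_of_ne_nil _ hm0]
    rw [hyg] at hp
    by_cases hkg : k * g = 1
    · rw [hkg, map_one, mul_one, wd_eval hmred] at hp
      exact hhead p hp
    · have hj' : Joins (eval m) (CoprodI.of (k * g)) := by
        intro p hp q hq
        rw [wd_eval hmred] at hp
        rw [wd_of hkg] at hq
        obtain rfl : ⟨j, k * g⟩ = q := by simpa using hq
        exact (List.isChain_append.mp hred.2).2.2 p hp ⟨j, k⟩ (by simp)
      rw [hj'.wd_mul, wd_eval hmred, List.head?_append_of_ne_nil _ hm0] at hp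
      exact hhead p hp

/-- Every element is an element of the `i`-th factor times one not starting in that factor. -/
theorem exists_of_mul (i : ι) (x : CoprodI G) :
    ∃ (g : G i) (y : CoprodI G), x = CoprodI.of g * y ∧ ∀ p ∈ (wd y).head?, p.1 ≠ i := by
  by_cases h : ∀ p ∈ (wd x).head?, p.1 ≠ i
  · exact ⟨1, x, by simp, h⟩
  · push Not at h
    obtain ⟨⟨j, g⟩, hp, rfl⟩ := h
    obtain ⟨m, hm⟩ := List.head?_eq_some_iff.mp hp
    have hred := wd_reduced x
    rw [hm] at hred
    have hmred : Reduced m := ⟨fun p hp => hred.1 p (by simp [hp]), hred.2.of_cons⟩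
    refine ⟨g, eval m, ?_, ?_⟩
    · rw [← eval_wd x, hm, eval_cons]
    · rw [wd_eval hmred]
      exact fun p hp => ((List.isChain_cons.mp hred.2).1 p hp).symm

/-- The centralizer of a nontrivial element of a factor lies in that factor. -/
theorem exists_of_eq_of_commute {i : ι} {g : G i} (hg : g ≠ 1) {x : CoprodI G}
    (hx : Commute x (CoprodI.of g)) : ∃ k : G i, x = CoprodI.of k := by
  obtain ⟨k, y, rfl, hy⟩ := exists_of_mul i x
  by_cases hy1 : y = 1
  · exact ⟨k, by simp [hy1]⟩
  exfalso
  -- `y * g` does not start in the `i`-th factor, while its other form `(k⁻¹ * g * k) * y` does.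
  have hg' : k⁻¹ * g * k ≠ 1 := by
    intro h
    apply hg
    simpa using (conj_eq_one_iff (a := k⁻¹) (b := g)).mp (by simpa using h)
  have he : y * CoprodI.of g = CoprodI.of (k⁻¹ * g * k) * y := by
    have := hx.eq
    simp only [map_mul, map_inv, mul_assoc] at this ⊢
    rw [← this, inv_mul_cancel_left]
  have hj : Joins (CoprodI.of (k⁻¹ * g * k)) y := by
    intro p hp q hq
    rw [wd_of hg'] at hp
    obtain rfl : ⟨i, k⁻¹ * g * k⟩ = p := by simpa using hp
    exact (hy q hq).symm
  refine not_head_mul_of hy g ⟨i, k⁻¹ * g * k⟩ ?_ hy1 rfl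
  rw [he, hj.wd_mul, wd_of hg']
  simp

/-! ### Reduction to the two cases by conjugation -/

/-- A word whose first and last letters lie in the same factor either is a single letter or can be
shortened by conjugation. -/
theorem of_or_conj_of_not_joins {b : CoprodI G} (hbb : ¬ Joins b b) :
    (∃ (i : ι) (g : G i), b = CoprodI.of g) ∨
      ∃ u : CoprodI G, (wd (u * b * u⁻¹)).length < (wd b).length := by
  simp only [Joins, not_forall, not_not] at hbb
  obtain ⟨⟨i, h⟩, hp, ⟨j, g⟩, hq, hij⟩ := hbb
  obtain rfl : i = j := hij
  obtain ⟨t, ht⟩ := List.head?_eq_some_iff.mp hq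
  have hred := wd_reduced b
  rcases List.eq_nil_or_concat t with rfl | ⟨m, p, rfl⟩
  · left
    exact ⟨i, g, by rw [← eval_wd b, ht]; simp⟩
  right
  rw [ht] at hp hred
  obtain rfl : p = ⟨i, h⟩ := by
    simpa [List.getLast?_cons, List.getLast?_append] using hp
  have hmp : List.IsChain (fun p q : Σ i, G i => p.1 ≠ q.1) (m ++ [⟨i, h⟩]) := by
    simpa using hred.2.of_cons
  obtain ⟨hm1, -, hm2⟩ := List.isChain_append.mp hmp
  have hmred : Reduced m := ⟨fun p hp => hred.1 p (by simp [hp]), hm1⟩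
  have he : (CoprodI.of g)⁻¹ * b * (CoprodI.of g)⁻¹⁻¹ = eval m * CoprodI.of (h * g) := by
    rw [← eval_wd b, ht]
    simp [mul_assoc]
  refine ⟨(CoprodI.of g)⁻¹, ?_⟩
  rw [he, ht]
  by_cases hhg : h * g = 1
  · rw [hhg, map_one, mul_one, wd_eval hmred]
    simp
  · have hj : Joins (eval m) (CoprodI.of (h * g)) := by
      intro p hp q hq
      rw [wd_eval hmred] at hp
      rw [wd_of hhg] at hq
      obtain rfl : ⟨i, h * g⟩ = q := by simpa using hq
      exact hm2 p hp ⟨i, h⟩ (by simp)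
    rw [hj.wd_mul, wd_eval hmred, wd_of hhg]
    simp

/-- Nontrivial elements commuting with a common nontrivial element commute, in a free product of an arbitrary
family of commutative transitive groups. -/
theorem commute_of_commute (hG : ∀ i, CommutativeTransitive (G i)) {b : CoprodI G} (hb : b ≠ 1)
    {a c : CoprodI G} (ha : a ≠ 1) (hc : c ≠ 1) (hab : Commute a b) (hbc : Commute b c) :
    Commute a c := by
  induction hn : (wd b).length using Nat.strong_induction_on generalizing a b c with
  | _ n ih =>
  by_cases hbb : Joins b b
  · exact commute_of_joins hb hbb hab hbc.symm
  rcases of_or_conj_of_not_joins hbb with ⟨i, g, rfl⟩ | ⟨u, hu⟩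
  · have hg : g ≠ 1 := by
      rintro rfl
      exact hb (map_one _)
    obtain ⟨k, rfl⟩ := exists_of_eq_of_commute hg hab
    obtain ⟨l, rfl⟩ := exists_of_eq_of_commute hg hbc.symm
    have hinj : Function.Injective (CoprodI.of : G i →* CoprodI G) := CoprodI.of_injective i
    refine (hG i k g l ?_ hg ?_ (hab.of_map hinj) (hbc.of_map hinj)).map _
    · rintro rfl
      exact ha (map_one _)
    · rintro rfl
      exact hc (map_one _)
  · have key := ih _ (hn ▸ hu) (b := MulAut.conj u b) (a := MulAut.conj u a)
      (c := MulAut.conj u c) (by simpa using hb) (by simpa using ha) (by simpa using hc)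
      (hab.map _) (hbc.map _) rfl
    exact key.of_map (MulAut.conj u).injective

/-! ### The binary free product as an indexed one -/

/-- Commutative transitivity passes to subgroups. -/
theorem commutativeTransitive_of_injective {A B : Type*} [Group A] [Group B] (f : A →* B)
    (hf : Function.Injective f) (hB : CommutativeTransitive B) : CommutativeTransitive A := by
  intro a b c ha hb hc hab hbc
  have h1 : ∀ x : A, x ≠ 1 → f x ≠ 1 := fun x hx => (map_ne_one_iff f hf).mpr hx
  exact (hB _ _ _ (h1 a ha) (h1 b hb) (h1 c hc) (hab.map f) (hbc.map f)).of_map hf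

/-- The two groups as a family indexed by `Bool`, lifted to a common universe. -/
def Pair (G : Type u) (H : Type v) : Bool → Type (max u v)
  | true => ULift.{v} G
  | false => ULift.{u} H

instance (G : Type u) (H : Type v) [Group G] [Group H] : ∀ b, Group (Pair G H b)
  | true => inferInstanceAs (Group (ULift.{v} G))
  | false => inferInstanceAs (Group (ULift.{u} H))

/-- The identification of `G` with a member of the family `Pair G H`. -/
def pairTrue (G : Type u) (H : Type v) [Group G] [Group H] : G ≃* Pair G H true :=
  (MulEquiv.ulift.{u, v} (α := G)).symm

/-- The identification of `H` with a member of the family `Pair G H`. -/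
def pairFalse (G : Type u) (H : Type v) [Group G] [Group H] : H ≃* Pair G H false :=
  (MulEquiv.ulift.{v, u} (α := H)).symm

theorem exists_injective (G : Type u) (H : Type v) [Group G] [Group H] :
    ∃ f : Coprod G H →* CoprodI (Pair G H), Function.Injective f := by
  let f : Coprod G H →* CoprodI (Pair G H) :=
    Coprod.lift (CoprodI.of.comp (pairTrue G H).toMonoidHom)
      (CoprodI.of.comp (pairFalse G H).toMonoidHom)
  let k : ∀ b, Pair G H b →* Coprod G H
    | true => Coprod.inl.comp (pairTrue G H).symm.toMonoidHom
    | false => Coprod.inr.comp (pairFalse G H).symm.toMonoidHom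
  have h : (CoprodI.lift k).comp f = MonoidHom.id _ := by
    apply Coprod.hom_ext <;> ext x <;> simp [f, k]
  exact ⟨f, Function.LeftInverse.injective fun x => DFunLike.congr_fun h x⟩

end FreeProd

/-- A free product of commutative transitive groups is commutative transitive. -/
theorem coprod_commutativeTransitive (G H : Type*) [Group G] [Group H]
    (hG : CommutativeTransitive G) (hH : CommutativeTransitive H) :
    CommutativeTransitive (Monoid.Coprod G H) := by
  obtain ⟨f, hf⟩ := FreeProd.exists_injective G H
  refine FreeProd.commutativeTransitive_of_injective f hf fun a b c ha hb hc hab hbc =>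
    FreeProd.commute_of_commute (fun i => ?_) hb ha hc hab hbc
  cases i with
  | true =>
    exact FreeProd.commutativeTransitive_of_injective
      (FreeProd.pairTrue G H).symm.toMonoidHom (FreeProd.pairTrue G H).symm.injective hG
  | false =>
    exact FreeProd.commutativeTransitive_of_injective
      (FreeProd.pairFalse G H).symm.toMonoidHom (FreeProd.pairFalse G H).symm.injective hH
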